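/- arXiv:1211.1058 — 2 statements merged into one kernel-verified Lean document; each statement's English description precedes it below -/
import Mathlib

section
/- For every dimension s ≥ 1, every N ≥ 1 and every q ∈ (0,1), the probability that a random point set (z_1, …, z_N) of N i.i.d. uniform points in [0,1]^s satisfies D*_N(z_1, …, z_N) ≤ 5.7 · √(4.9 + log((1−q)^{−1})/s) · √s/√N is at least q. Equivalently, the product measure (of N copies of Lebesgue measure on [0,1]^s) of the set of N-tuples (z_1,…,z_N) ∈ ([0,1]^s)^N with D*_N(z_1,…,z_N) ≤ 5.7 · √(4.9 + log((1−q)^{−1})/s) · √s/√N is at least q. -/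
open MeasureTheory Real

/-- The star-discrepancy of the point set `z 0, …, z (N-1)` in `[0,1]^s`. -/
noncomputable def starDiscrepancy (s N : ℕ) (z : Fin N → (Fin s → ℝ)) : ℝ :=
  ⨆ x : (Set.Icc (0 : Fin s → ℝ) 1),
    |(Nat.card {n : Fin N // z n ∈ Set.Icc 0 (x : Fin s → ℝ)} : ℝ) / N
      - ∏ i, (x : Fin s → ℝ) i|

/-!
The bound follows by chaining over bracketing covers of the class of anchored boxes. Boxes with
corners on a multiplicative grid of ratio `θ` have volumes that are powers of `θ`, so those of
volume at least `θ ^ n` are indexed by the lattice points of a dilated simplex. With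
`1 - θ ^ s ≈ δ` this gives a `δ`-bracketing cover with at most
`(C (1 + log (1 / δ) / δ)) ^ s` members, where `C` does not depend on `s`: the entropy at scale
`δ = 16⁻ᵏ` is at most `(4 k + 1) s`.

A box is then reached from `∅` or the whole space, where the discrepancy vanishes, through its
approximations at the scales `1, 16⁻¹, 16⁻², …`. Two consecutive approximations differ by a set of
measure `O(16⁻ʲ)`, so Bernstein's inequality makes the discrepancy of their difference
sub-Gaussian of standard deviation `O(4⁻ʲ / √N)`. A union bound over all pairs of sets at all
levels leaves a total deviation of order `√(s / N)`.
-/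

section Bernstein

open ProbabilityTheory

variable {Ω : Type*} [MeasurableSpace Ω] {μ : Measure Ω} [IsProbabilityMeasure μ]

theorem mgf_le_exp_of_abs_le_one {X : Ω → ℝ} (hX : AEMeasurable X μ)
    (hb : ∀ᵐ ω ∂μ, |X ω| ≤ 1) {t : ℝ} (ht : |t| ≤ 1) :
    mgf X μ t ≤ exp (t * ∫ ω, X ω ∂μ + t ^ 2 * ∫ ω, X ω ^ 2 ∂μ) := by
  have hX_int : Integrable X μ := .of_bound hX.aestronglyMeasurable 1 hb
  have hX_sq_int : Integrable (fun ω => X ω ^ 2) μ := by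
    refine .of_bound (hX.pow_const 2).aestronglyMeasurable 1 ?_
    filter_upwards [hb] with ω hω
    simpa using hω
  have hexp_int : Integrable (fun ω => exp (t * X ω)) μ :=
    integrable_exp_mul_of_mem_Icc hX (hb.mono fun _ hω => abs_le.mp hω)
  have hexp_le : ∀ᵐ ω ∂μ, exp (t * X ω) ≤ 1 + t * X ω + t ^ 2 * X ω ^ 2 := by
    filter_upwards [hb] with ω hω
    have htX : |t * X ω| ≤ 1 := by
      rw [abs_mul]
      exact mul_le_one₀ ht (abs_nonneg _) hω
    linarith [(abs_le.mp (abs_exp_sub_one_sub_id_le htX)).2, mul_pow t (X ω) 2]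
  calc mgf X μ t ≤ ∫ ω, (1 + t * X ω + t ^ 2 * X ω ^ 2) ∂μ :=
        integral_mono_ae hexp_int
          (((integrable_const 1).add (hX_int.const_mul t)).add (hX_sq_int.const_mul _)) hexp_le
    _ = t * ∫ ω, X ω ∂μ + t ^ 2 * ∫ ω, X ω ^ 2 ∂μ + 1 := by
        rw [integral_add (by fun_prop) (by fun_prop), integral_add (by fun_prop) (by fun_prop),
          integral_const_mul, integral_const_mul, integral_const, probReal_univ, one_smul]
        ring
    _ ≤ _ := add_one_le_exp _

/-- **Bernstein's inequality** in its Gaussian range `y ≤ 2 V`. -/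
theorem measureReal_sum_sub_integral_ge_le_exp {κ : Type*} [Fintype κ] {X : κ → Ω → ℝ}
    (hindep : iIndepFun X μ) (hX : ∀ n, Measurable (X n)) (hb : ∀ n, ∀ᵐ ω ∂μ, |X n ω| ≤ 1)
    {V y : ℝ} (hV : ∑ n, ∫ ω, X n ω ^ 2 ∂μ ≤ V) (hy : 0 ≤ y) (hyV : y ≤ 2 * V) :
    μ.real {ω | y ≤ ∑ n, (X n ω - ∫ ω, X n ω ∂μ)} ≤ exp (-(y ^ 2 / (4 * V))) := by
  set m := ∑ n, ∫ ω, X n ω ∂μ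
  -- the minimiser of `-t y + t² V`
  set t := y / (2 * V) with ht_def
  have ht0 : 0 ≤ t := div_nonneg hy (hy.trans hyV)
  have ht1 : t ≤ 1 := div_le_one_of_le₀ hyV (hy.trans hyV)
  have hexp_int : Integrable (fun ω => exp (t * (∑ n, X n) ω)) μ :=
    hindep.integrable_exp_mul_sum hX fun n _ =>
      integrable_exp_mul_of_mem_Icc (hX n).aemeasurable ((hb n).mono fun _ hω => abs_le.mp hω)
  have hmgf : mgf (∑ n, X n) μ t ≤ exp (t * m + t ^ 2 * V) := by
    calc mgf (∑ n, X n) μ t = ∏ n, mgf (X n) μ t := hindep.mgf_sum hX _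
      _ ≤ ∏ n, exp (t * ∫ ω, X n ω ∂μ + t ^ 2 * ∫ ω, X n ω ^ 2 ∂μ) :=
          Finset.prod_le_prod (fun _ _ => mgf_nonneg) fun n _ =>
            mgf_le_exp_of_abs_le_one (hX n).aemeasurable (hb n) (abs_le.mpr ⟨by linarith, ht1⟩)
      _ = exp (t * m + t ^ 2 * ∑ n, ∫ ω, X n ω ^ 2 ∂μ) := by
          rw [← exp_sum, Finset.sum_add_distrib, ← Finset.mul_sum, ← Finset.mul_sum]
      _ ≤ _ := by gcongr
  have hset : {ω | y ≤ ∑ n, (X n ω - ∫ ω, X n ω ∂μ)} = {ω | y + m ≤ (∑ n, X n) ω} := by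
    ext ω
    simp only [Finset.sum_sub_distrib, Finset.sum_apply, Set.mem_ofPred_eq, le_sub_iff_add_le, m]
  have hexponent : -t * (y + m) + (t * m + t ^ 2 * V) = -(y ^ 2 / (4 * V)) := by
    rcases eq_or_ne V 0 with rfl | hV0
    · simp [ht_def]
    · rw [ht_def]
      field_simp
      ring
  calc μ.real {ω | y ≤ ∑ n, (X n ω - ∫ ω, X n ω ∂μ)}
      ≤ exp (-t * (y + m)) * mgf (∑ n, X n) μ t :=
        hset ▸ measure_ge_le_exp_mul_mgf (y + m) ht0 hexp_int
    _ ≤ exp (-t * (y + m)) * exp (t * m + t ^ 2 * V) := by gcongr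
    _ = _ := by rw [← exp_add, hexponent]

end Bernstein

section LocalDiscrepancy

variable {X κ : Type*} [Fintype κ]

theorem indicator_proportion_mono (z : κ → X) {A B : Set X} (hAB : A ⊆ B) :
    (∑ n, A.indicator (1 : X → ℝ) (z n)) / Fintype.card κ
      ≤ (∑ n, B.indicator (1 : X → ℝ) (z n)) / Fintype.card κ := by
  gcongr
  exact zero_le_one

theorem indicator_sub_indicator_sq (A B : Set X) (x : X) :
    (B.indicator (1 : X → ℝ) x - A.indicator (1 : X → ℝ) x) ^ 2
      = (symmDiff A B).indicator (1 : X → ℝ) x := by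
  by_cases hA : x ∈ A <;> by_cases hB : x ∈ B <;> simp [hA, hB, Set.mem_symmDiff]

variable [MeasurableSpace X]

/-- The discrepancy of the points `z` on the set `A`: the proportion of the points lying in `A`
minus the measure of `A`. The proportion is `0` when there are no points. -/
noncomputable def localDiscrepancy (ν : Measure X) (z : κ → X) (A : Set X) : ℝ :=
  (∑ n, A.indicator (1 : X → ℝ) (z n)) / Fintype.card κ - ν.real A

theorem localDiscrepancy_empty (ν : Measure X) (z : κ → X) : localDiscrepancy ν z ∅ = 0 := by
  simp [localDiscrepancy]

variable {ν : Measure X}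

theorem localDiscrepancy_univ [IsProbabilityMeasure ν] [Nonempty κ] (z : κ → X) :
    localDiscrepancy ν z Set.univ = 0 := by
  simp [localDiscrepancy]

theorem abs_localDiscrepancy_le_add_of_subset [IsFiniteMeasure ν] {z : κ → X} {A Q B : Set X}
    (hA : MeasurableSet A) (hAQ : A ⊆ Q) (hQB : Q ⊆ B) {b : ℝ}
    (hAb : |localDiscrepancy ν z A| ≤ b) (hBb : |localDiscrepancy ν z B| ≤ b) :
    |localDiscrepancy ν z Q| ≤ b + ν.real (B \ A) := by
  have hprop_AQ := indicator_proportion_mono z hAQ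
  have hprop_QB := indicator_proportion_mono z hQB
  have hν_AQ : ν.real A ≤ ν.real Q := measureReal_mono hAQ
  have hν_QB : ν.real Q ≤ ν.real B := measureReal_mono hQB
  rw [measureReal_sdiff (hAQ.trans hQB) hA]
  unfold localDiscrepancy at *
  rw [abs_le] at *
  constructor <;> linarith

theorem abs_localDiscrepancy_le_one [IsProbabilityMeasure ν] (z : κ → X) (A : Set X) :
    |localDiscrepancy ν z A| ≤ 1 := by
  have hprop_nonneg : 0 ≤ (∑ n, A.indicator (1 : X → ℝ) (z n)) / Fintype.card κ :=
    div_nonneg (Finset.sum_nonneg fun n _ => Set.indicator_nonneg (fun _ _ => zero_le_one) _)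
      (Nat.cast_nonneg _)
  have hprop_le : (∑ n, A.indicator (1 : X → ℝ) (z n)) / Fintype.card κ ≤ 1 :=
    (indicator_proportion_mono z A.subset_univ).trans (by simpa using div_self_le_one _)
  have hν_nonneg : 0 ≤ ν.real A := measureReal_nonneg
  have hν_le : ν.real A ≤ 1 := measureReal_le_one
  rw [localDiscrepancy, abs_le]
  constructor <;> linarith

theorem card_mul_localDiscrepancy_sub [Nonempty κ] (z : κ → X) (A B : Set X) :
    Fintype.card κ * (localDiscrepancy ν z B - localDiscrepancy ν z A)
      = ∑ n, (B.indicator (1 : X → ℝ) (z n) - A.indicator (1 : X → ℝ) (z n)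
          - (ν.real B - ν.real A)) := by
  have hcard : (Fintype.card κ : ℝ) ≠ 0 := by simp
  simp only [localDiscrepancy, Finset.sum_sub_distrib, Finset.sum_const, Finset.card_univ,
    nsmul_eq_mul]
  field_simp
  ring

variable [IsProbabilityMeasure ν]

theorem measureReal_localDiscrepancy_sub_ge_le_exp {A B : Set X} (hA : MeasurableSet A)
    (hB : MeasurableSet B) {p y : ℝ} (hp : ν.real (symmDiff A B) ≤ p) (hy : 0 ≤ y)
    (hyp : y ≤ 2 * p) :
    (Measure.pi fun _ : κ => ν).real
        {z | y ≤ localDiscrepancy ν z B - localDiscrepancy ν z A}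
      ≤ exp (-(y ^ 2 * Fintype.card κ / (4 * p))) := by
  rcases isEmpty_or_nonempty κ with hκ | hκ
  · simp
  set N := (Fintype.card κ : ℝ)
  have hN : 0 < N := by simp [N, Fintype.card_pos]
  set f : X → ℝ := fun x => B.indicator (1 : X → ℝ) x - A.indicator (1 : X → ℝ) x with hf_def
  have hf : Measurable f := (measurable_one.indicator hB).sub (measurable_one.indicator hA)
  have hf_bdd (x : X) : |f x| ≤ 1 := by
    rw [← sq_le_one_iff_abs_le_one, indicator_sub_indicator_sq]
    exact Set.indicator_le_self' (fun _ _ => zero_le_one) x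
  have hf_mean (n : κ) : ∫ z, f (z n) ∂(Measure.pi fun _ : κ => ν) = ν.real B - ν.real A := by
    rw [integral_comp_eval (μ := fun _ : κ => ν) hf.aestronglyMeasurable,
      integral_sub ((integrable_const 1).indicator hB) ((integrable_const 1).indicator hA),
      integral_indicator_one hB, integral_indicator_one hA]
  have hf_sq (n : κ) : ∫ z, f (z n) ^ 2 ∂(Measure.pi fun _ : κ => ν) ≤ p := by
    rw [integral_comp_eval (μ := fun _ : κ => ν) (f := fun x => f x ^ 2)
      (hf.pow_const 2).aestronglyMeasurable]
    simpa only [hf_def, indicator_sub_indicator_sq, integral_indicator_one (hA.symmDiff hB)]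
  have hset : {z : κ → X | y ≤ localDiscrepancy ν z B - localDiscrepancy ν z A}
      = {z | N * y ≤ ∑ n, (f (z n) - ∫ z, f (z n) ∂(Measure.pi fun _ : κ => ν))} := by
    ext z
    have hsum : N * (localDiscrepancy ν z B - localDiscrepancy ν z A)
        = ∑ n, (f (z n) - (ν.real B - ν.real A)) := card_mul_localDiscrepancy_sub z A B
    simp only [Set.mem_ofPred_eq, hf_mean, ← hsum, mul_le_mul_iff_right₀ hN]
  have hbernstein := measureReal_sum_sub_integral_ge_le_exp (y := N * y) (V := N * p)
    (ProbabilityTheory.iIndepFun_pi (μ := fun _ : κ => ν) fun _ => hf.aemeasurable)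
    (fun n => hf.comp (measurable_pi_apply n)) (fun n => .of_forall fun z => hf_bdd (z n))
    ((Finset.sum_le_sum fun n _ => hf_sq n).trans_eq (by simp [N]))
    (by positivity) (by nlinarith)
  rw [hset]
  convert hbernstein using 3
  field_simp

theorem measureReal_abs_localDiscrepancy_sub_ge_le_exp {A B : Set X} (hA : MeasurableSet A)
    (hB : MeasurableSet B) {p y : ℝ} (hp : ν.real (symmDiff A B) ≤ p) (hy : 0 ≤ y)
    (hyp : y ≤ 2 * p) :
    (Measure.pi fun _ : κ => ν).real
        {z | y ≤ |localDiscrepancy ν z B - localDiscrepancy ν z A|}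
      ≤ 2 * exp (-(y ^ 2 * Fintype.card κ / (4 * p))) := by
  have hupper := measureReal_localDiscrepancy_sub_ge_le_exp (κ := κ) hA hB hp hy hyp
  have hlower := measureReal_localDiscrepancy_sub_ge_le_exp (κ := κ) hB hA
    (symmDiff_comm A B ▸ hp) hy hyp
  have hsplit : {z : κ → X | y ≤ |localDiscrepancy ν z B - localDiscrepancy ν z A|}
      ⊆ {z | y ≤ localDiscrepancy ν z B - localDiscrepancy ν z A}
        ∪ {z | y ≤ localDiscrepancy ν z A - localDiscrepancy ν z B} := by
    intro z hz
    simpa only [Set.mem_union, Set.mem_ofPred_eq, le_abs, neg_sub] using hz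
  calc _ ≤ _ := measureReal_mono hsplit
    _ ≤ _ := measureReal_union_le _ _
    _ ≤ _ := by linarith

end LocalDiscrepancy

section Chaining

variable {X : Type*} [MeasurableSpace X] {κ : Type*} [Fintype κ] {ν : Measure X}
  {𝒜 : Set (Set X)}

/-- A finite family `F` of measurable sets is a `δ`-bracketing cover of the class `𝒜` if every
member of `𝒜` lies between two members of `F` whose difference has measure at most `δ`. -/
structure IsBracketingCover (ν : Measure X) (𝒜 : Set (Set X)) (δ : ℝ) (F : Finset (Set X)) :
    Prop where
  measurableSet : ∀ A ∈ F, MeasurableSet A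
  exists_bracket : ∀ Q ∈ 𝒜, ∃ A ∈ F, ∃ B ∈ F, A ⊆ Q ∧ Q ⊆ B ∧ ν.real (B \ A) ≤ δ

open Classical in
theorem isBracketingCover_empty_univ [IsProbabilityMeasure ν] :
    IsBracketingCover ν 𝒜 1 {∅, Set.univ} where
  measurableSet := by simp
  exists_bracket Q _ := ⟨∅, by simp, Set.univ, by simp, Q.empty_subset, Q.subset_univ, by simp⟩

theorem abs_localDiscrepancy_le_sum_add [IsFiniteMeasure ν] {F : ℕ → Finset (Set X)}
    {δ y : ℕ → ℝ} (hF : ∀ k, IsBracketingCover ν 𝒜 (δ k) (F k)) {z : κ → X}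
    (hz₀ : ∀ A ∈ F 0, localDiscrepancy ν z A = 0) {K : ℕ}
    (hz : ∀ j < K, ∀ A ∈ F j, ∀ B ∈ F (j + 1), ν.real (symmDiff A B) ≤ δ j + δ (j + 1) →
      |localDiscrepancy ν z B - localDiscrepancy ν z A| ≤ y j)
    {Q : Set X} (hQ : Q ∈ 𝒜) :
    |localDiscrepancy ν z Q| ≤ ∑ j ∈ Finset.range K, y j + δ K := by
  choose A hAF B hBF hAQ hQB hAB using fun k => (hF k).exists_bracket Q hQ
  have hA_near (k : ℕ) : ν.real (symmDiff (A k) Q) ≤ δ k := by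
    rw [symmDiff_of_le (hAQ k)]
    exact (measureReal_mono (Set.sdiff_subset_sdiff_left (hQB k))).trans (hAB k)
  have hB_near (k : ℕ) : ν.real (symmDiff Q (B k)) ≤ δ k := by
    rw [symmDiff_of_le (hQB k)]
    exact (measureReal_mono (Set.sdiff_subset_sdiff_right (hAQ k))).trans (hAB k)
  have hchain : ∀ k ≤ K, ∀ R ∈ F k, ν.real (symmDiff Q R) ≤ δ k →
      |localDiscrepancy ν z R| ≤ ∑ j ∈ Finset.range k, y j := by
    intro k
    induction k with
    | zero => intro _ R hR _; simp [hz₀ R hR]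
    | succ k ih =>
      intro hk R hR hQR
      have hprev := ih (by omega) (A k) (hAF k) (symmDiff_comm (A k) Q ▸ hA_near k)
      have hstep := hz k hk (A k) (hAF k) R hR
        ((measureReal_symmDiff_le R).trans (add_le_add (hA_near k) hQR))
      rw [Finset.sum_range_succ]
      linarith [abs_sub_abs_le_abs_sub (localDiscrepancy ν z R) (localDiscrepancy ν z (A k))]
  have hA := hchain K le_rfl (A K) (hAF K) (symmDiff_comm (A K) Q ▸ hA_near K)
  have hB := hchain K le_rfl (B K) (hBF K) (hB_near K)
  linarith [hAB K, abs_localDiscrepancy_le_add_of_subset ((hF K).measurableSet _ (hAF K))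
    (hAQ K) (hQB K) hA hB]

theorem measureReal_exists_pair_ge_le [IsProbabilityMeasure ν] {F G : Finset (Set X)}
    (hF : ∀ A ∈ F, MeasurableSet A) (hG : ∀ B ∈ G, MeasurableSet B) {p y : ℝ} (hy : 0 ≤ y)
    (hyp : y ≤ 2 * p) :
    (Measure.pi fun _ : κ => ν).real {z | ∃ A ∈ F, ∃ B ∈ G, ν.real (symmDiff A B) ≤ p ∧
        y ≤ |localDiscrepancy ν z B - localDiscrepancy ν z A|}
      ≤ F.card * G.card * (2 * exp (-(y ^ 2 * Fintype.card κ / (4 * p)))) := by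
  classical
  set P := Measure.pi fun _ : κ => ν
  let T := (F ×ˢ G).filter fun AB => ν.real (symmDiff AB.1 AB.2) ≤ p
  let E (AB : Set X × Set X) : Set (κ → X) :=
    {z | y ≤ |localDiscrepancy ν z AB.2 - localDiscrepancy ν z AB.1|}
  have hcover : {z : κ → X | ∃ A ∈ F, ∃ B ∈ G, ν.real (symmDiff A B) ≤ p ∧
      y ≤ |localDiscrepancy ν z B - localDiscrepancy ν z A|} ⊆ ⋃ AB ∈ T, E AB := by
    rintro z ⟨A, hA, B, hB, hAB, hz⟩
    exact Set.mem_biUnion (x := (A, B))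
      (Finset.mem_filter.mpr ⟨Finset.mk_mem_product hA hB, hAB⟩) hz
  calc _ ≤ P.real (⋃ AB ∈ T, E AB) := measureReal_mono hcover (measure_ne_top _ _)
    _ ≤ ∑ AB ∈ T, P.real (E AB) := measureReal_biUnion_finset_le _ _
    _ ≤ ∑ AB ∈ T, 2 * exp (-(y ^ 2 * Fintype.card κ / (4 * p))) := by
        refine Finset.sum_le_sum fun AB hAB => ?_
        obtain ⟨hmem, hp⟩ := Finset.mem_filter.mp hAB
        obtain ⟨hA, hB⟩ := Finset.mem_product.mp hmem
        exact measureReal_abs_localDiscrepancy_sub_ge_le_exp (hF _ hA) (hG _ hB) hp hy hyp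
    _ = T.card * (2 * exp (-(y ^ 2 * Fintype.card κ / (4 * p)))) := by
        rw [Finset.sum_const, nsmul_eq_mul]
    _ ≤ _ := by
        gcongr
        exact_mod_cast (Finset.card_filter_le _ _).trans_eq (Finset.card_product _ _)

theorem measureReal_exists_localDiscrepancy_gt_le [IsProbabilityMeasure ν]
    {F : ℕ → Finset (Set X)} {δ y : ℕ → ℝ} (hF : ∀ k, IsBracketingCover ν 𝒜 (δ k) (F k))
    (hF₀ : ∀ (z : κ → X), ∀ A ∈ F 0, localDiscrepancy ν z A = 0) {K : ℕ}
    (hy : ∀ j < K, 0 ≤ y j) (hyδ : ∀ j < K, y j ≤ 2 * (δ j + δ (j + 1))) :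
    (Measure.pi fun _ : κ => ν).real
        {z | ∃ Q ∈ 𝒜, ∑ j ∈ Finset.range K, y j + δ K < |localDiscrepancy ν z Q|}
      ≤ ∑ j ∈ Finset.range K, (F j).card * (F (j + 1)).card *
          (2 * exp (-(y j ^ 2 * Fintype.card κ / (4 * (δ j + δ (j + 1)))))) := by
  let E (j : ℕ) : Set (κ → X) := {z | ∃ A ∈ F j, ∃ B ∈ F (j + 1),
    ν.real (symmDiff A B) ≤ δ j + δ (j + 1) ∧
      y j ≤ |localDiscrepancy ν z B - localDiscrepancy ν z A|}
  have hcover : {z : κ → X | ∃ Q ∈ 𝒜,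
      ∑ j ∈ Finset.range K, y j + δ K < |localDiscrepancy ν z Q|}
        ⊆ ⋃ j ∈ Finset.range K, E j := by
    rintro z ⟨Q, hQ, hzQ⟩
    by_contra hzE
    simp only [Set.mem_iUnion, not_exists, Finset.mem_range] at hzE
    refine hzQ.not_ge (abs_localDiscrepancy_le_sum_add hF (hF₀ z) ?_ hQ)
    intro j hj A hA B hB hAB
    by_contra! hlt
    exact hzE j hj ⟨A, hA, B, hB, hAB, hlt.le⟩
  calc _ ≤ _ := measureReal_mono hcover (measure_ne_top _ _)
    _ ≤ _ := measureReal_biUnion_finset_le _ _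
    _ ≤ _ := Finset.sum_le_sum fun j hj =>
        measureReal_exists_pair_ge_le (hF j).measurableSet (hF (j + 1)).measurableSet
          (hy j (Finset.mem_range.mp hj)) (hyδ j (Finset.mem_range.mp hj))

end Chaining

section LatticeSimplex

variable {ι : Type*} [Fintype ι]

open Classical in
/-- The lattice points of the dilated simplex: the exponent vectors `k : ι → ℕ` whose entries sum
to at most `n`. -/
noncomputable def latticeSimplex (ι : Type*) [Fintype ι] (n : ℕ) : Finset (ι → ℕ) :=
  (Finset.range (n + 1)).biUnion fun m => Finset.piAntidiag Finset.univ m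

theorem mem_latticeSimplex {n : ℕ} {k : ι → ℕ} : k ∈ latticeSimplex ι n ↔ ∑ i, k i ≤ n := by
  simp [latticeSimplex]

theorem card_latticeSimplex (n : ℕ) :
    (latticeSimplex ι n).card = (n + Fintype.card ι).choose (Fintype.card ι) := by
  classical
  have hlevel (m : ℕ) : (Finset.piAntidiag (Finset.univ : Finset ι) m).card
      = (Fintype.card ι).multichoose m := by
    rw [← Finset.map_sym_eq_piAntidiag, Finset.card_map, Finset.sym_univ, Finset.card_univ,
      Sym.card_sym_eq_multichoose]
  have hdisj : (Finset.range (n + 1) : Set ℕ).PairwiseDisjoint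
      (Finset.piAntidiag (Finset.univ : Finset ι)) := by
    intro m _ m' _ hmm'
    refine Finset.disjoint_left.mpr fun k hk hk' => hmm' ?_
    rw [← (Finset.mem_piAntidiag.mp hk).1, ← (Finset.mem_piAntidiag.mp hk').1]
  calc (latticeSimplex ι n).card
      = ∑ m ∈ Finset.range (n + 1), (Fintype.card ι).multichoose m := by
        rw [← Finset.sum_congr rfl fun m _ => hlevel m, ← Finset.card_biUnion hdisj]
        congr
    _ = _ := Nat.sum_range_multichoose n _

theorem card_latticeSimplex_le_pow [Nonempty ι] (n : ℕ) :
    ((latticeSimplex ι n).card : ℝ)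
      ≤ (exp 1 * (1 + n / Fintype.card ι)) ^ Fintype.card ι := by
  set s := Fintype.card ι
  have hs : (s : ℝ) ≠ 0 := by simp [s]
  have hpow_le : (s : ℝ) ^ s / s.factorial ≤ exp 1 ^ s := by
    rw [← exp_nat_mul, mul_one]
    exact pow_div_factorial_le_exp _ (Nat.cast_nonneg _) _
  calc ((latticeSimplex ι n).card : ℝ) ≤ ((n + s).choose s : ℕ) := by rw [card_latticeSimplex]
    _ ≤ (n + s : ℕ) ^ s / s.factorial := Nat.choose_le_pow_div _ _
    _ = (s : ℝ) ^ s / s.factorial * (1 + n / s) ^ s := by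
        rw [div_mul_eq_mul_div, ← mul_pow]
        congr 2
        push_cast
        field_simp
        ring
    _ ≤ exp 1 ^ s * (1 + n / s) ^ s := by gcongr
    _ = _ := (mul_pow _ _ _).symm

end LatticeSimplex

section AnchoredBoxes

variable {ι : Type*} [Fintype ι]

/-- The uniform distribution on the unit cube `[0,1]^ι`. -/
noncomputable abbrev unitCubeMeasure (ι : Type*) [Fintype ι] : Measure (ι → ℝ) :=
  Measure.pi fun _ => volume.restrict (Set.Icc (0 : ℝ) 1)

instance isProbabilityMeasure_unitCubeMeasure : IsProbabilityMeasure (unitCubeMeasure ι) := by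
  have : IsProbabilityMeasure (volume.restrict (Set.Icc (0 : ℝ) 1)) := ⟨by simp⟩
  infer_instance

theorem unitCubeMeasure_real_Icc_zero {x : ι → ℝ} (hx : x ∈ Set.Icc 0 1) :
    (unitCubeMeasure ι).real (Set.Icc 0 x) = ∏ i, x i := by
  rw [Measure.real, ← Set.pi_univ_Icc, Measure.pi_pi, ENNReal.toReal_prod]
  refine Finset.prod_congr rfl fun i _ => ?_
  have hx₀ : 0 ≤ x i := hx.1 i
  have hsub : Set.Icc 0 (x i) ⊆ Set.Icc 0 1 := Set.Icc_subset_Icc_right (hx.2 i)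
  simp [Measure.restrict_apply, Set.inter_eq_left.mpr hsub, hx₀]

/-- The class of boxes `[0, x]` with `x` in the unit cube, over which the star-discrepancy is a
supremum. -/
def anchoredBoxes (ι : Type*) : Set (Set (ι → ℝ)) :=
  Set.Icc 0 '' Set.Icc 0 1

theorem exists_ge_prod_eq {x : ι → ℝ} (hx : x ∈ Set.Icc 0 1) {v : ℝ} (hxv : ∏ i, x i ≤ v)
    (hv : v ≤ 1) : ∃ y ∈ Set.Icc (0 : ι → ℝ) 1, x ≤ y ∧ ∏ i, y i = v := by
  have hcont : ContinuousOn (fun t : ℝ => ∏ i, AffineMap.lineMap x 1 t i) (Set.Icc 0 1) := by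
    simp only [AffineMap.pi_lineMap_apply]
    fun_prop
  obtain ⟨t, ht, hprod⟩ := intermediate_value_Icc zero_le_one hcont
    (show v ∈ Set.Icc _ _ by simpa using ⟨hxv, hv⟩)
  obtain ⟨hxy, hy⟩ : AffineMap.lineMap x 1 t ∈ Set.Icc x 1 :=
    (convex_Icc x 1).lineMap_mem (Set.left_mem_Icc.mpr hx.2) (Set.right_mem_Icc.mpr hx.2) ht
  exact ⟨_, ⟨hx.1.trans hxy, hy⟩, hxy, hprod⟩

/-- The anchored box whose corner is the point `(θ ^ k i)ᵢ` of the multiplicative grid. -/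
def gridBox (θ : ℝ) (k : ι → ℕ) : Set (ι → ℝ) :=
  Set.Icc 0 fun i => θ ^ k i

variable {θ : ℝ}

theorem unitCubeMeasure_real_gridBox (hθ₀ : 0 ≤ θ) (hθ₁ : θ ≤ 1) (k : ι → ℕ) :
    (unitCubeMeasure ι).real (gridBox θ k) = θ ^ ∑ i, k i := by
  rw [gridBox, unitCubeMeasure_real_Icc_zero
    ⟨fun i => pow_nonneg hθ₀ _, fun i => pow_le_one₀ hθ₀ hθ₁⟩, Finset.prod_pow_eq_pow_sum]

theorem unitCubeMeasure_real_gridBox_add_one (hθ₀ : 0 ≤ θ) (hθ₁ : θ ≤ 1) (k : ι → ℕ) :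
    (unitCubeMeasure ι).real (gridBox θ (k + 1)) = θ ^ (∑ i, k i + Fintype.card ι) := by
  simp [unitCubeMeasure_real_gridBox hθ₀ hθ₁, Finset.sum_add_distrib]

theorem unitCubeMeasure_real_gridBox_sdiff_le (hθ₀ : 0 ≤ θ) (hθ₁ : θ ≤ 1) (k : ι → ℕ) :
    (unitCubeMeasure ι).real (gridBox θ k \ gridBox θ (k + 1)) ≤ 1 - θ ^ Fintype.card ι := by
  have hsub : gridBox θ (k + 1) ⊆ gridBox θ k :=
    Set.Icc_subset_Icc_right fun i => pow_le_pow_of_le_one hθ₀ hθ₁ (k i).le_succ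
  calc (unitCubeMeasure ι).real (gridBox θ k \ gridBox θ (k + 1))
      = θ ^ (∑ i, k i) * (1 - θ ^ Fintype.card ι) := by
        rw [measureReal_sdiff hsub measurableSet_Icc, unitCubeMeasure_real_gridBox hθ₀ hθ₁,
          unitCubeMeasure_real_gridBox_add_one hθ₀ hθ₁]
        ring
    _ ≤ _ := mul_le_of_le_one_left (sub_nonneg.mpr (pow_le_one₀ hθ₀ hθ₁)) (pow_le_one₀ hθ₀ hθ₁)

theorem exists_gridBox_bracket (hθ₀ : 0 < θ) (hθ₁ : θ < 1) {x : ι → ℝ} (hx : x ∈ Set.Icc 0 1)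
    {m : ℕ} (hm : θ ^ m ≤ ∏ i, x i) :
    ∃ k : ι → ℕ, ∑ i, k i ≤ m ∧ gridBox θ (k + 1) ⊆ Set.Icc 0 x ∧ Set.Icc 0 x ⊆ gridBox θ k := by
  have hx_pos (i : ι) : 0 < x i := by
    refine (hx.1 i).lt_of_ne fun h => (pow_pos hθ₀ m).not_ge (hm.trans_eq ?_)
    exact Finset.prod_eq_zero (Finset.mem_univ i) h.symm
  choose k hlower hupper using
    fun i => exists_nat_pow_near_of_lt_one (hx_pos i) (hx.2 i) hθ₀ hθ₁
  have hprod : ∏ i, x i ≤ θ ^ ∑ i, k i := by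
    rw [← Finset.prod_pow_eq_pow_sum]
    exact Finset.prod_le_prod (fun i _ => (hx_pos i).le) fun i _ => hupper i
  exact ⟨k, (pow_le_pow_iff_right_of_lt_one₀ hθ₀ hθ₁).mp (hm.trans hprod),
    Set.Icc_subset_Icc_right fun i => (hlower i).le, Set.Icc_subset_Icc_right hupper⟩

theorem exists_gridBox_superset (hθ₀ : 0 < θ) (hθ₁ : θ < 1) {x : ι → ℝ} (hx : x ∈ Set.Icc 0 1)
    {l : ℕ} (hl : ∏ i, x i ≤ θ ^ (l + Fintype.card ι)) :
    ∃ k : ι → ℕ, ∑ i, k i ≤ l + Fintype.card ι ∧ Set.Icc 0 x ⊆ gridBox θ k ∧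
      (unitCubeMeasure ι).real (gridBox θ k) ≤ θ ^ l := by
  obtain ⟨y, hy, hxy, hvol_y⟩ := exists_ge_prod_eq hx hl (pow_le_one₀ hθ₀.le hθ₁.le)
  obtain ⟨k, hk, hlower, hupper⟩ := exists_gridBox_bracket hθ₀ hθ₁ hy hvol_y.ge
  refine ⟨k, hk, (Set.Icc_subset_Icc_right hxy).trans hupper, ?_⟩
  have hvol_le : θ ^ (∑ i, k i + Fintype.card ι) ≤ θ ^ (l + Fintype.card ι) := by
    rw [← unitCubeMeasure_real_gridBox_add_one hθ₀.le hθ₁.le, ← hvol_y,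
      ← unitCubeMeasure_real_Icc_zero hy]
    exact measureReal_mono hlower
  rw [unitCubeMeasure_real_gridBox hθ₀.le hθ₁.le]
  simpa only [pow_add, mul_le_mul_iff_left₀ (pow_pos hθ₀ _)] using hvol_le

open Classical in
/-- The candidate brackets for anchored boxes: the boxes of the multiplicative grid of ratio `θ`
and volume at least `θ ^ n`, and `∅` as a lower bracket for the boxes of small volume. -/
noncomputable def gridCover (ι : Type*) [Fintype ι] (θ : ℝ) (n : ℕ) : Finset (Set (ι → ℝ)) :=
  insert ∅ ((latticeSimplex ι n).image (gridBox θ))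

theorem gridBox_mem_gridCover {n : ℕ} {k : ι → ℕ} (hk : ∑ i, k i ≤ n) :
    gridBox θ k ∈ gridCover ι θ n :=
  Finset.mem_insert_of_mem (Finset.mem_image_of_mem _ (mem_latticeSimplex.mpr hk))

theorem card_gridCover_le [Nonempty ι] (θ : ℝ) (n : ℕ) :
    ((gridCover ι θ n).card : ℝ)
      ≤ (exp 1 * (1 + n / Fintype.card ι) + 1) ^ Fintype.card ι := by
  have hcard : (gridCover ι θ n).card ≤ (latticeSimplex ι n).card + 1 := by
    grw [gridCover, Finset.card_insert_le, Finset.card_image_le]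
  calc ((gridCover ι θ n).card : ℝ) ≤ (latticeSimplex ι n).card + 1 := by exact_mod_cast hcard
    _ ≤ (exp 1 * (1 + n / Fintype.card ι)) ^ Fintype.card ι + 1 ^ Fintype.card ι := by
        rw [one_pow]
        gcongr
        exact card_latticeSimplex_le_pow _
    _ ≤ _ := pow_add_pow_le (by positivity) zero_le_one Fintype.card_ne_zero

theorem isBracketingCover_gridCover (hθ₀ : 0 < θ) (hθ₁ : θ < 1) {δ : ℝ}
    (hδ : 1 - θ ^ Fintype.card ι ≤ δ) {l : ℕ} (hl : θ ^ l ≤ δ) :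
    IsBracketingCover (unitCubeMeasure ι) (anchoredBoxes ι) δ
      (gridCover ι θ (l + 2 * Fintype.card ι)) where
  measurableSet A hA := by
    rcases Finset.mem_insert.mp hA with rfl | hA
    · exact MeasurableSet.empty
    · obtain ⟨k, -, rfl⟩ := Finset.mem_image.mp hA
      exact measurableSet_Icc
  exists_bracket := by
    rintro _ ⟨x, hx, rfl⟩
    rcases le_total (θ ^ (l + Fintype.card ι)) (∏ i, x i) with hvol | hvol
    · obtain ⟨k, hk, hlower, hupper⟩ := exists_gridBox_bracket hθ₀ hθ₁ hx hvol
      have hk_succ : ∑ i, (k + 1) i = ∑ i, k i + Fintype.card ι := by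
        simp [Finset.sum_add_distrib]
      exact ⟨_, gridBox_mem_gridCover (by omega), _, gridBox_mem_gridCover (by omega), hlower,
        hupper, (unitCubeMeasure_real_gridBox_sdiff_le hθ₀.le hθ₁.le k).trans hδ⟩
    · obtain ⟨k, hk, hupper, hvol_k⟩ := exists_gridBox_superset hθ₀ hθ₁ hx hvol
      refine ⟨∅, Finset.mem_insert_self _ _, _, gridBox_mem_gridCover (by omega),
        Set.empty_subset _, hupper, ?_⟩
      rw [Set.sdiff_empty]
      exact hvol_k.trans hl

theorem exists_isBracketingCover_anchoredBoxes [Nonempty ι] {δ : ℝ} (hδ₀ : 0 < δ) (hδ₁ : δ ≤ 1) :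
    ∃ F, IsBracketingCover (unitCubeMeasure ι) (anchoredBoxes ι) δ F ∧
      (F.card : ℝ) ≤ (exp 1 * (4 + log δ⁻¹ / δ) + 1) ^ Fintype.card ι := by
  set s := Fintype.card ι
  have hs : 0 < (s : ℝ) := by simp [s, Fintype.card_pos]
  have hlog : 0 ≤ log δ⁻¹ := log_nonneg ((one_le_inv₀ hδ₀).mpr hδ₁)
  let θ := exp (-(δ / s))
  let l := ⌈s * (log δ⁻¹ / δ)⌉₊
  have hθ₁ : θ < 1 := exp_lt_one_iff.mpr (neg_lt_zero.mpr (by positivity))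
  have hstep : 1 - θ ^ s ≤ δ := by
    have hpow : θ ^ s = exp (-δ) := by
      rw [← exp_nat_mul]
      congr 1
      field_simp
    linarith [add_one_le_exp (-δ)]
  have hl : θ ^ l ≤ δ := by
    rw [← exp_nat_mul, ← le_log_iff_exp_le hδ₀, ← neg_le_neg_iff, ← log_inv]
    calc log δ⁻¹ = s * (log δ⁻¹ / δ) * (δ / s) := by field_simp
      _ ≤ l * (δ / s) := by gcongr; exact Nat.le_ceil _
      _ = _ := by ring
  have hratio : 1 + ((l + 2 * s : ℕ) : ℝ) / s ≤ 4 + log δ⁻¹ / δ := by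
    have hceil : (l : ℝ) < s * (log δ⁻¹ / δ) + 1 := Nat.ceil_lt_add_one (by positivity)
    have hs_one : (1 : ℝ) ≤ s := by exact_mod_cast Fintype.card_pos (α := ι)
    rw [← le_sub_iff_add_le', div_le_iff₀ hs]
    push_cast
    linarith
  refine ⟨_, isBracketingCover_gridCover (exp_pos _) hθ₁ hstep hl,
    (card_gridCover_le θ _).trans ?_⟩
  gcongr (exp 1 * ?_ + 1) ^ s

end AnchoredBoxes

section EntropyAtScales

variable {ι : Type*} [Fintype ι] [Nonempty ι]

theorem log_sixteen_lt : log 16 < 2.8 := by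
  have h : log 16 = 4 * log 2 := by
    rw [show (16 : ℝ) = 2 ^ 4 by norm_num, log_pow]
    norm_num
  linarith [log_two_lt_d9]

theorem mul_sixteen_pow_add_le_exp {k : ℕ} (hk : 1 ≤ k) :
    2.8 * k * 16 ^ k + 4.4 ≤ exp (4 * k) := by
  have hexp_four : 54 ≤ exp 4 := by
    calc (54 : ℝ) ≤ 2.7182818283 ^ 4 := by norm_num
      _ ≤ exp 1 ^ 4 := by gcongr; exact exp_one_gt_d9.le
      _ = exp 4 := by rw [← exp_nat_mul]; norm_num
  have hpow : 2.8 * k * 16 ^ k + 4.4 ≤ (54 : ℝ) ^ k := by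
    induction k, hk using Nat.le_induction with
    | base => norm_num
    | succ k hk ih =>
      have hk' : (1 : ℝ) ≤ k := by exact_mod_cast hk
      have h16 : (0 : ℝ) < 16 ^ k := by positivity
      push_cast
      rw [pow_succ, pow_succ]
      nlinarith
  calc _ ≤ (54 : ℝ) ^ k := hpow
    _ ≤ exp 4 ^ k := by gcongr
    _ = _ := by rw [← exp_nat_mul, mul_comm]

theorem exists_isBracketingCover_anchoredBoxes_inv_sixteen_pow {k : ℕ} (hk : 1 ≤ k) :
    ∃ F, IsBracketingCover (unitCubeMeasure ι) (anchoredBoxes ι) ((1 / 16) ^ k) F ∧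
      (F.card : ℝ) ≤ exp ((4 * k + 1) * Fintype.card ι) := by
  obtain ⟨F, hF, hcard⟩ := exists_isBracketingCover_anchoredBoxes (ι := ι)
    (δ := (1 / 16) ^ k) (by positivity) (pow_le_one₀ (by norm_num) (by norm_num))
  refine ⟨F, hF, hcard.trans ?_⟩
  have hlog : log ((1 / 16) ^ k)⁻¹ / (1 / 16) ^ k ≤ 2.8 * k * 16 ^ k := by
    rw [one_div, inv_pow, inv_inv, div_inv_eq_mul, log_pow, mul_comm (k : ℝ)]
    gcongr
    exact log_sixteen_lt.le
  have hlog₀ : 0 ≤ log ((1 / 16) ^ k)⁻¹ :=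
    log_nonneg (one_le_inv_iff₀.mpr
      ⟨by positivity, pow_le_one₀ (by norm_num) (by norm_num)⟩)
  have hbase : exp 1 * (4 + log ((1 / 16) ^ k)⁻¹ / (1 / 16) ^ k) + 1 ≤ exp 1 * exp (4 * k) := by
    nlinarith [mul_sixteen_pow_add_le_exp hk, exp_one_gt_d9]
  calc (exp 1 * (4 + log ((1 / 16) ^ k)⁻¹ / (1 / 16) ^ k) + 1) ^ Fintype.card ι
      ≤ (exp 1 * exp (4 * k)) ^ Fintype.card ι := by gcongr
    _ = _ := by
        rw [← exp_add, ← exp_nat_mul]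
        ring_nf

theorem exists_isBracketingCover_anchoredBoxes_scales :
    ∃ F : ℕ → Finset (Set (ι → ℝ)), (∀ A ∈ F 0, A = ∅ ∨ A = Set.univ) ∧
      (∀ k, IsBracketingCover (unitCubeMeasure ι) (anchoredBoxes ι) ((1 / 16) ^ k) (F k)) ∧
      ∀ k, ((F k).card : ℝ) ≤ exp ((4 * k + 1) * Fintype.card ι) := by
  classical
  choose F hF hcard using
    fun k : ℕ => exists_isBracketingCover_anchoredBoxes_inv_sixteen_pow (ι := ι) k.succ_pos
  refine ⟨fun k => k.casesOn {∅, Set.univ} F, by simp, ?_, ?_⟩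
  · rintro (_ | k)
    · simpa using isBracketingCover_empty_univ
    · exact hF k
  · rintro (_ | k)
    · have hs : (1 : ℝ) ≤ Fintype.card ι := by exact_mod_cast Fintype.card_pos (α := ι)
      have htwo : (({∅, Set.univ} : Finset (Set (ι → ℝ))).card : ℝ) ≤ 2 := by
        exact_mod_cast Finset.card_le_two
      simpa using htwo.trans (by linarith [add_one_le_exp (Fintype.card ι : ℝ)])
    · exact hcard k

end EntropyAtScales

section ChainingAtScales

/-- The deviation allowed at level `j` of the chain, where sets of measure about `16⁻ʲ` are
compared. The standard deviation there scales like `4⁻ʲ`, and the factor `j + 2` makes the tail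
exponent quadratic in `j`, so that it beats the entropy `(8 j + 6) s` of the level. -/
noncomputable def chainStep (r : ℝ) (j : ℕ) : ℝ := (j + 2) * (1 / 4) ^ j * r

theorem chainStep_nonneg {r : ℝ} (hr : 0 ≤ r) (j : ℕ) : 0 ≤ chainStep r j := by
  unfold chainStep
  positivity

theorem sum_chainStep_le {r : ℝ} (hr : 0 ≤ r) (K : ℕ) :
    ∑ j ∈ Finset.range K, chainStep r j ≤ 28 / 9 * r := by
  have hclosed : ∑ j ∈ Finset.range K, chainStep r j
      = 28 / 9 * r - (28 / 9 + 4 / 3 * K) * (1 / 4) ^ K * r := by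
    induction K with
    | zero => simp
    | succ K ih =>
      rw [Finset.sum_range_succ, ih, chainStep]
      push_cast
      ring
  rw [hclosed, sub_le_self_iff]
  positivity

theorem sum_two_mul_exp_neg_two_pow_le_one (K : ℕ) :
    ∑ j ∈ Finset.range K, 2 * exp (-2) ^ (j + 1) ≤ 1 := by
  have hexp : exp (-2) ≤ 1 / 3 := by
    rw [exp_neg, one_div]
    gcongr
    linarith [add_one_le_exp (2 : ℝ)]
  suffices ∑ j ∈ Finset.range K, 2 * exp (-2) ^ (j + 1) ≤ 1 - (1 / 3) ^ K from
    this.trans (sub_le_self _ (by positivity))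
  induction K with
  | zero => simp
  | succ K ih =>
    have hpow : exp (-2) ^ (K + 1) ≤ (1 / 3) ^ (K + 1) := by gcongr
    rw [Finset.sum_range_succ]
    rw [pow_succ (1 / 3 : ℝ)] at *
    linarith

theorem chainStep_le {r : ℝ} {K j : ℕ} (hr : r ≤ (1 / 16) ^ K) (hj : j ≤ K) :
    chainStep r j ≤ 2 * ((1 / 16) ^ j + (1 / 16) ^ (j + 1)) := by
  have hcoeff : (j + 2) * (1 / 4 : ℝ) ^ j ≤ 2 := by
    rw [one_div, inv_pow, ← div_eq_mul_inv, div_le_iff₀ (by positivity)]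
    have hpow : 1 + j * (3 : ℝ) ≤ (1 + 3) ^ j := one_add_mul_le_pow (by norm_num) j
    norm_num at hpow
    linarith
  calc chainStep r j ≤ (j + 2) * (1 / 4) ^ j * (1 / 16) ^ j := by
        unfold chainStep
        gcongr
        exact hr.trans (pow_le_pow_of_le_one (by norm_num) (by norm_num) hj)
    _ ≤ 2 * (1 / 16) ^ j := by gcongr
    _ ≤ _ := by gcongr; exact le_add_of_nonneg_right (by positivity)

theorem chainStep_sq_mul_div (r N : ℝ) (j : ℕ) :
    chainStep r j ^ 2 * N / (4 * ((1 / 16) ^ j + (1 / 16) ^ (j + 1)))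
      = (j + 2) ^ 2 * (4 / 17 * (r ^ 2 * N)) := by
  rw [chainStep, mul_pow, mul_pow, ← pow_mul, mul_comm j, pow_mul, pow_succ (1 / 16 : ℝ)]
  norm_num
  field_simp
  ring

theorem add_le_add_two_sq_mul {s L : ℝ} (hs : 1 ≤ s) (hL : 0 ≤ L) (j : ℕ) :
    (8 * j + 6) * s + L + 2 * (j + 1) ≤ (j + 2) ^ 2 * (2 * s + L / 4) := by
  have hj : (j : ℝ) ≤ j ^ 2 := by exact_mod_cast Nat.le_self_pow two_ne_zero j
  have hdiff : (j + 2) ^ 2 * (2 * s + L / 4) - ((8 * j + 6) * s + L + 2 * (j + 1))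
      = 2 * (j ^ 2 - j) * s + 2 * (j + 1) * (s - 1) + (j ^ 2 / 4 + j) * L := by ring
  have : 0 ≤ (j : ℝ) ^ 2 - j := sub_nonneg.mpr hj
  have : 0 ≤ s - 1 := sub_nonneg.mpr hs
  rw [← sub_nonneg, hdiff]
  positivity

theorem exp_mul_exp_mul_exp_chainStep_le {s N r L : ℝ} (hs : 1 ≤ s) (hL : 0 ≤ L)
    (hr : 17 / 2 * s + 17 / 16 * L ≤ r ^ 2 * N) (j : ℕ) :
    exp ((4 * j + 1) * s) * exp ((4 * (j + 1 : ℕ) + 1) * s) *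
        (2 * exp (-(chainStep r j ^ 2 * N / (4 * ((1 / 16) ^ j + (1 / 16) ^ (j + 1))))))
      ≤ 2 * exp (-2) ^ (j + 1) * exp (-L) := by
  have hexponent : (8 * j + 6) * s + L + 2 * (j + 1)
      ≤ (j + 2) ^ 2 * (4 / 17 * (r ^ 2 * N)) := by
    refine (add_le_add_two_sq_mul hs hL j).trans ?_
    gcongr
    linarith
  rw [chainStep_sq_mul_div, ← exp_nat_mul]
  calc _ = 2 * exp ((8 * j + 6) * s - (j + 2) ^ 2 * (4 / 17 * (r ^ 2 * N))) := by
        rw [mul_left_comm, ← exp_add, ← exp_add]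
        push_cast
        ring_nf
    _ ≤ 2 * exp ((j + 1 : ℕ) * -2 + -L) := by
        gcongr
        push_cast
        linarith
    _ = _ := by rw [exp_add, mul_assoc]

variable {X : Type*} [MeasurableSpace X] {κ : Type*} [Fintype κ] {ν : Measure X}
  [IsProbabilityMeasure ν] {𝒜 : Set (Set X)}

theorem measureReal_exists_localDiscrepancy_gt_le_exp [Nonempty κ] {F : ℕ → Finset (Set X)}
    (hF : ∀ k, IsBracketingCover ν 𝒜 ((1 / 16) ^ k) (F k))
    (hF₀ : ∀ A ∈ F 0, A = ∅ ∨ A = Set.univ) {s : ℝ} (hs : 1 ≤ s)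
    (hcard : ∀ k, ((F k).card : ℝ) ≤ exp ((4 * k + 1) * s)) {r L : ℝ} (hr₀ : 0 < r) (hL : 0 ≤ L)
    (hr : 17 / 2 * s + 17 / 16 * L ≤ r ^ 2 * Fintype.card κ) :
    (Measure.pi fun _ : κ => ν).real {z | ∃ Q ∈ 𝒜, 37 / 9 * r < |localDiscrepancy ν z Q|}
      ≤ exp (-L) := by
  rcases lt_or_ge 1 r with hr₁ | hr₁
  · have hempty : {z : κ → X | ∃ Q ∈ 𝒜, 37 / 9 * r < |localDiscrepancy ν z Q|} = ∅ := by
      refine Set.eq_empty_of_forall_notMem fun z ⟨Q, _, hQ⟩ => ?_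
      linarith [abs_localDiscrepancy_le_one (ν := ν) z Q]
    simpa [hempty] using (exp_pos (-L)).le
  obtain ⟨K, hK_lt, hK_le⟩ :=
    exists_nat_pow_near_of_lt_one hr₀ hr₁ (by norm_num : (0 : ℝ) < 1 / 16) (by norm_num)
  have htotal : ∑ j ∈ Finset.range (K + 1), chainStep r j + (1 / 16) ^ (K + 1) ≤ 37 / 9 * r := by
    linarith [sum_chainStep_le hr₀.le (K + 1)]
  calc _ ≤ (Measure.pi fun _ : κ => ν).real {z | ∃ Q ∈ 𝒜,
        ∑ j ∈ Finset.range (K + 1), chainStep r j + (1 / 16) ^ (K + 1)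
          < |localDiscrepancy ν z Q|} :=
        measureReal_mono (Set.ofPred_subset_ofPred.mpr fun z ⟨Q, hQ, hlt⟩ =>
          ⟨Q, hQ, htotal.trans_lt hlt⟩) (measure_ne_top _ _)
    _ ≤ _ := measureReal_exists_localDiscrepancy_gt_le hF
        (fun z A hA => by
          rcases hF₀ A hA with rfl | rfl
          exacts [localDiscrepancy_empty ν z, localDiscrepancy_univ z])
        (fun j _ => chainStep_nonneg hr₀.le j)
        fun j hj => chainStep_le hK_le (Nat.lt_succ_iff.mp hj)
    _ ≤ ∑ j ∈ Finset.range (K + 1), 2 * exp (-2) ^ (j + 1) * exp (-L) := by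
        refine Finset.sum_le_sum fun j _ =>
          le_trans ?_ (exp_mul_exp_mul_exp_chainStep_le hs hL hr j)
        gcongr
        exacts [hcard j, hcard (j + 1)]
    _ ≤ 1 * exp (-L) := by
        rw [← Finset.sum_mul]
        gcongr
        exact sum_two_mul_exp_neg_two_pow_le_one _
    _ = exp (-L) := one_mul _

end ChainingAtScales

section StarDiscrepancy

theorem starDiscrepancy_le {s N : ℕ} {z : Fin N → Fin s → ℝ} {b : ℝ}
    (hb : ∀ Q ∈ anchoredBoxes (Fin s), |localDiscrepancy (unitCubeMeasure (Fin s)) z Q| ≤ b) :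
    starDiscrepancy s N z ≤ b := by
  have : Nonempty (Set.Icc (0 : Fin s → ℝ) 1) := ⟨⟨0, le_rfl, zero_le_one⟩⟩
  refine ciSup_le fun x => ?_
  have hcount : (Nat.card {n : Fin N // z n ∈ Set.Icc 0 (x : Fin s → ℝ)} : ℝ)
      = ∑ n, (Set.Icc 0 (x : Fin s → ℝ)).indicator (1 : (Fin s → ℝ) → ℝ) (z n) := by
    classical
    rw [Nat.card_eq_fintype_card, Fintype.card_subtype]
    simp [Set.indicator_apply]
  have hx := hb _ (Set.mem_image_of_mem _ x.2)
  rwa [localDiscrepancy, Fintype.card_fin, ← hcount, unitCubeMeasure_real_Icc_zero x.2] at hx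

theorem one_sub_exp_neg_le_measureReal_starDiscrepancy_le {s N : ℕ} (hs : 1 ≤ s) (hN : 1 ≤ N)
    {r L : ℝ} (hr₀ : 0 < r) (hL : 0 ≤ L) (hr : 17 / 2 * s + 17 / 16 * L ≤ r ^ 2 * N) :
    1 - exp (-L) ≤ (Measure.pi fun _ : Fin N => unitCubeMeasure (Fin s)).real
      {z | starDiscrepancy s N z ≤ 37 / 9 * r} := by
  have : Nonempty (Fin s) := ⟨0, hs⟩
  have : Nonempty (Fin N) := ⟨0, hN⟩
  obtain ⟨F, hF₀, hF, hcard⟩ := exists_isBracketingCover_anchoredBoxes_scales (ι := Fin s)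
  rw [Fintype.card_fin] at hcard
  set P := Measure.pi fun _ : Fin N => unitCubeMeasure (Fin s)
  set bad : Set (Fin N → Fin s → ℝ) := {z | ∃ Q ∈ anchoredBoxes (Fin s),
    37 / 9 * r < |localDiscrepancy (unitCubeMeasure (Fin s)) z Q|}
  have hbad : P.real bad ≤ exp (-L) :=
    measureReal_exists_localDiscrepancy_gt_le_exp hF hF₀ (by exact_mod_cast hs) hcard hr₀ hL
      (by simpa using hr)
  have hgood : badᶜ ⊆ {z | starDiscrepancy s N z ≤ 37 / 9 * r} := by
    intro z hz
    refine starDiscrepancy_le fun Q hQ => ?_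
    by_contra! hlt
    exact hz ⟨Q, hQ, hlt⟩
  have hone : 1 ≤ P.real bad + P.real badᶜ := by
    rw [← probReal_univ (μ := P), ← Set.union_compl_self bad]
    exact measureReal_union_le _ _
  linarith [measureReal_mono (μ := P) hgood]

end StarDiscrepancy

theorem stmt_0 (s N : ℕ) (hs : 1 ≤ s) (hN : 1 ≤ N) (q : ℝ) (hq : q ∈ Set.Ioo (0:ℝ) 1) :
    ENNReal.ofReal q ≤
      (Measure.pi fun _ : Fin N => Measure.pi fun _ : Fin s => volume.restrict (Set.Icc (0:ℝ) 1))
        {z : Fin N → Fin s → ℝ |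
          starDiscrepancy s N z ≤
            5.7 * Real.sqrt (4.9 + Real.log (1 - q)⁻¹ / s) * (Real.sqrt s / Real.sqrt N)} := by
  obtain ⟨hq₀, hq₁⟩ := hq
  have hs_pos : (0 : ℝ) < s := by exact_mod_cast hs
  have hN_pos : (0 : ℝ) < N := by exact_mod_cast hN
  set L := log (1 - q)⁻¹ with hL_def
  have hL : 0 ≤ L := log_nonneg ((one_le_inv₀ (by linarith)).mpr (by linarith))
  have hexp : exp (-L) = 1 - q := by rw [hL_def, log_inv, neg_neg, exp_log (by linarith)]
  set ε := √(4.9 + L / s) * (√s / √N) with hε_def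
  have hε : 0 < ε := by positivity
  have hε_sq : ε ^ 2 * N = 4.9 * s + L := by
    rw [hε_def, mul_pow, div_pow, sq_sqrt (by positivity), sq_sqrt hs_pos.le, sq_sqrt hN_pos.le]
    field_simp
  have htail := one_sub_exp_neg_le_measureReal_starDiscrepancy_le (r := 4 / 3 * ε) hs hN
    (by positivity) hL (by rw [mul_pow]; linarith)
  rw [hexp, sub_sub_cancel] at htail
  refine (ENNReal.ofReal_le_ofReal (htail.trans (measureReal_mono ?_))).trans_eq
    (ofReal_measureReal (measure_ne_top _ _))
  intro z (hz : starDiscrepancy s N z ≤ _)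
  rw [Set.mem_ofPred_eq, mul_assoc]
  linarith
end

section
/- For every dimension s ≥ 1 and every δ ∈ (0,1] there exists a δ-cover Γ of [0,1]^s with |Γ| ≤ (2e)^s · (δ^{−1} + 1)^s; that is, the minimal cardinality 𝒩(s,δ) of a δ-cover of [0,1]^s satisfies 𝒩(s,δ) ≤ (2e)^s (δ^{−1} + 1)^s. -/
/-!
Put `n = ⌊s / δ⌋`. For integers `n ≥ j₁ ≥ j₂ ≥ … ≥ jₛ ≥ 0` consider the box with lower corner
`x = (j₁ / (n + 1), j₂ / (j₁ + 1), …, jₛ / (jₛ₋₁ + 1))` and upper corner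
`z = ((j₁ + 1) / (n + 1), (j₂ + 1) / (j₁ + 1), …, (jₛ + 1) / (jₛ₋₁ + 1))`. Choosing the `jᵢ`
successively shows that these boxes cover the cube. Adding a first coordinate with cell
`[j / (n + 1), (j + 1) / (n + 1)]` to a box of dimension `s` whose corner volumes differ by at most
`s / (j + 1)` cancels the denominator `j + 1`, so the tolerance becomes `(s + 1) / (n + 1)`; this is
why coarser grids suffice over cells close to `0`. Nonincreasing sequences are multisets, so there
are `(n + s).choose s ≤ (n + s) ^ s / s! ≤ s ^ s / s! * (δ⁻¹ + 1) ^ s` boxes, where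
`s ^ s / s! ≤ e ^ s`. Each box contributes two corners to the `δ`-cover.
-/

open Real

/-- `Γ` is a `δ`-cover of `[0,1]^s`: a finite set of points of `[0,1]^s` such that every
`y ∈ [0,1]^s` is bracketed by points `x ≤ y ≤ z` of `Γ ∪ {0}` with
`λ([0,z)) - λ([0,x)) = ∏ zᵢ - ∏ xᵢ ≤ δ`. -/
def IsDeltaCover (s : ℕ) (δ : ℝ) (Γ : Finset (Fin s → ℝ)) : Prop :=
  (∀ p ∈ Γ, p ∈ Set.Icc (0 : Fin s → ℝ) 1) ∧
  ∀ y ∈ Set.Icc (0 : Fin s → ℝ) 1, ∃ x z : Fin s → ℝ,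
    (x ∈ Γ ∨ x = 0) ∧ (z ∈ Γ ∨ z = 0) ∧ x ≤ y ∧ y ≤ z ∧
    (∏ i, z i) - (∏ i, x i) ≤ δ

open Finset

variable {s : ℕ} {δ ε a b : ℝ} {p : (Fin s → ℝ) × (Fin s → ℝ)}
  {B : Finset ((Fin s → ℝ) × (Fin s → ℝ))}

/-- A `δ`-bracket: a box `[x, z]` in the unit cube, stored as the pair `(x, z)` of its corners,
such that the volumes of the anchored boxes `[0, z)` and `[0, x)` differ by at most `δ`. -/
structure IsBracket (δ : ℝ) (p : (Fin s → ℝ) × (Fin s → ℝ)) : Prop where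
  nonneg : 0 ≤ p.1
  le : p.1 ≤ p.2
  le_one : p.2 ≤ 1
  prod_sub_prod_le : ∏ i, p.2 i - ∏ i, p.1 i ≤ δ

/-- A `δ`-bracketing cover: a finite set of `δ`-brackets whose boxes cover the unit cube. Its
least cardinality is the bracketing number of anchored boxes. -/
structure IsBracketingCover_s4 (δ : ℝ) (B : Finset ((Fin s → ℝ) × (Fin s → ℝ))) : Prop where
  isBracket : ∀ p ∈ B, IsBracket δ p
  exists_mem_Icc : ∀ y ∈ Set.Icc (0 : Fin s → ℝ) 1, ∃ p ∈ B, y ∈ Set.Icc p.1 p.2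

theorem IsBracket.mono (hp : IsBracket δ p) (h : δ ≤ ε) : IsBracket ε p :=
  { hp with prod_sub_prod_le := hp.prod_sub_prod_le.trans h }

theorem IsBracketingCover_s4.mono (hB : IsBracketingCover_s4 δ B) (h : δ ≤ ε) :
    IsBracketingCover_s4 ε B :=
  ⟨fun p hp => (hB.isBracket p hp).mono h, hB.exists_mem_Icc⟩

/-- The first and second components of the pairs in `B`; for a set of brackets, the corners of its
boxes. -/
def corners {α : Type*} [DecidableEq α] (B : Finset (α × α)) : Finset α :=
  B.image Prod.fst ∪ B.image Prod.snd

theorem card_corners_le {α : Type*} [DecidableEq α] (B : Finset (α × α)) :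
    #(corners B) ≤ 2 * #B :=
  calc #(corners B) ≤ #(B.image Prod.fst) + #(B.image Prod.snd) := card_union_le _ _
    _ ≤ #B + #B := add_le_add card_image_le card_image_le
    _ = 2 * #B := (two_mul _).symm

theorem IsBracketingCover_s4.isDeltaCover_corners (hB : IsBracketingCover_s4 δ B) :
    IsDeltaCover s δ (corners B) := by
  refine ⟨fun x hx => ?_, fun y hy => ?_⟩
  · rcases mem_union.1 hx with hx | hx <;> obtain ⟨p, hpB, rfl⟩ := mem_image.1 hx
    · have hp := hB.isBracket p hpB
      exact ⟨hp.nonneg, hp.le.trans hp.le_one⟩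
    · have hp := hB.isBracket p hpB
      exact ⟨hp.nonneg.trans hp.le, hp.le_one⟩
  · obtain ⟨p, hpB, hpy, hyp⟩ := hB.exists_mem_Icc y hy
    exact ⟨p.1, p.2, .inl (mem_union_left _ (mem_image_of_mem _ hpB)),
      .inl (mem_union_right _ (mem_image_of_mem _ hpB)), hpy, hyp,
      (hB.isBracket p hpB).prod_sub_prod_le⟩

/-- The corners of the box `[a, b] × [x, z]`, where `p = (x, z)`. -/
def consBracket (a b : ℝ) (p : (Fin s → ℝ) × (Fin s → ℝ)) :
    (Fin (s + 1) → ℝ) × (Fin (s + 1) → ℝ) :=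
  (Fin.cons a p.1, Fin.cons b p.2)

theorem IsBracket.cons (ha : 0 ≤ a) (hab : a ≤ b) (hb : b ≤ 1) (hp : IsBracket δ p) :
    IsBracket (b * δ + (b - a)) (consBracket a b p) where
  nonneg := Fin.cases ha hp.nonneg
  le := Fin.cases hab hp.le
  le_one := Fin.cases hb hp.le_one
  prod_sub_prod_le := by
    have prod_fst_le_one : ∏ i, p.1 i ≤ 1 :=
      prod_le_one (fun i _ => hp.nonneg i) fun i _ => (hp.le.trans hp.le_one) i
    simp only [consBracket, Fin.prod_cons]
    calc b * ∏ i, p.2 i - a * ∏ i, p.1 i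
        = b * (∏ i, p.2 i - ∏ i, p.1 i) + (b - a) * ∏ i, p.1 i := by ring
      _ ≤ b * δ + (b - a) :=
          add_le_add (mul_le_mul_of_nonneg_left hp.prod_sub_prod_le (ha.trans hab))
            (mul_le_of_le_one_right (sub_nonneg.2 hab) prod_fst_le_one)

theorem IsBracketingCover_s4.biUnion_consBracket {ι : Type*} {J : Finset ι} {a b δ : ι → ℝ}
    {B : ι → Finset ((Fin s → ℝ) × (Fin s → ℝ))}
    (hcell : ∀ j ∈ J, 0 ≤ a j ∧ a j ≤ b j ∧ b j ≤ 1)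
    (hcover : ∀ t ∈ Set.Icc (0 : ℝ) 1, ∃ j ∈ J, t ∈ Set.Icc (a j) (b j))
    (hB : ∀ j ∈ J, IsBracketingCover_s4 (δ j) (B j))
    (hε : ∀ j ∈ J, b j * δ j + (b j - a j) ≤ ε) :
    IsBracketingCover_s4 ε (J.biUnion fun j => (B j).image (consBracket (a j) (b j))) where
  isBracket q hq := by
    obtain ⟨j, hj, hq⟩ := mem_biUnion.1 hq
    obtain ⟨p, hp, rfl⟩ := mem_image.1 hq
    obtain ⟨ha, hab, hb⟩ := hcell j hj
    exact (((hB j hj).isBracket p hp).cons ha hab hb).mono (hε j hj)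
  exists_mem_Icc y hy := by
    obtain ⟨j, hj, hay, hyb⟩ := hcover (y 0) ⟨hy.1 0, hy.2 0⟩
    obtain ⟨p, hp, hpy, hyp⟩ :=
      (hB j hj).exists_mem_Icc (Fin.tail y) ⟨fun i => hy.1 i.succ, fun i => hy.2 i.succ⟩
    exact ⟨consBracket (a j) (b j) p, mem_biUnion.2 ⟨j, hj, mem_image_of_mem _ hp⟩,
      Fin.cases hay hpy, Fin.cases hyb hyp⟩

theorem exists_mem_Icc_div_succ (n : ℕ) {t : ℝ} (ht : t ∈ Set.Icc (0 : ℝ) 1) :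
    ∃ j ∈ range (n + 1), t ∈ Set.Icc (j / (n + 1) : ℝ) ((j + 1) / (n + 1)) := by
  have hn : (0 : ℝ) < n + 1 := n.cast_add_one_pos
  have hnonneg : 0 ≤ t * (n + 1) := mul_nonneg ht.1 hn.le
  have hle : t * (n + 1) ≤ n + 1 := mul_le_of_le_one_left hn.le ht.2
  -- The floor alone would be `n + 1` at `t = 1`.
  refine ⟨min n ⌊t * (n + 1)⌋₊, mem_range_succ_iff.2 (min_le_left _ _), ?_, ?_⟩
  · rw [div_le_iff₀ hn, Nat.cast_min]
    exact (min_le_right _ _).trans (Nat.floor_le hnonneg)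
  · rw [le_div_iff₀ hn, Nat.cast_min, ← min_add_add_right]
    exact le_min hle (Nat.lt_floor_add_one _).le

/-- Brackets obtained by cutting the first coordinate into `n + 1` equal cells and continuing over
the `j`-th cell with the brackets of one dimension less for `j + 1` cells. The shift by one keeps
every denominator positive. -/
noncomputable def gridBrackets : (s n : ℕ) → Finset ((Fin s → ℝ) × (Fin s → ℝ))
  | 0, _ => {(0, 0)}
  | s + 1, n => (range (n + 1)).biUnion fun j =>
      (gridBrackets s j).image (consBracket (j / (n + 1)) ((j + 1) / (n + 1)))

theorem card_gridBrackets_le (s n : ℕ) : #(gridBrackets s n) ≤ (n + s).choose s := by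
  induction s generalizing n with
  | zero => simp [gridBrackets]
  | succ s ih =>
    calc #(gridBrackets (s + 1) n)
        ≤ ∑ j ∈ range (n + 1), #(gridBrackets s j) :=
          card_biUnion_le.trans (sum_le_sum fun _ _ => card_image_le)
      _ ≤ ∑ j ∈ range (n + 1), (j + s).choose s := sum_le_sum fun j _ => ih j
      _ = (n + (s + 1)).choose (s + 1) := Nat.sum_range_add_choose n s

theorem isBracketingCover_gridBrackets (s n : ℕ) :
    IsBracketingCover_s4 (s / (n + 1)) (gridBrackets s n) := by
  induction s generalizing n with
  | zero =>
    have le_of_fin_zero (x y : Fin 0 → ℝ) : x ≤ y := (Subsingleton.elim x y).le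
    exact ⟨fun p _ => ⟨le_of_fin_zero _ _, le_of_fin_zero _ _, le_of_fin_zero _ _, by simp⟩,
      fun y _ => ⟨(0, 0), mem_singleton_self _, le_of_fin_zero _ _, le_of_fin_zero _ _⟩⟩
  | succ s ih =>
    have hn : (0 : ℝ) < n + 1 := n.cast_add_one_pos
    refine .biUnion_consBracket (fun j hj => ⟨by positivity, by gcongr; simp, ?_⟩)
      (fun t => exists_mem_Icc_div_succ n) (fun j _ => ih j) fun j _ => le_of_eq ?_
    · rw [div_le_one hn]
      exact_mod_cast mem_range.1 hj
    · push_cast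
      field_simp
      ring

theorem exists_isBracketingCover_card_le (s : ℕ) (hδ : 0 < δ) :
    ∃ B : Finset ((Fin s → ℝ) × (Fin s → ℝ)), IsBracketingCover_s4 δ B ∧
      (#B : ℝ) ≤ s ^ s / s.factorial * (δ⁻¹ + 1) ^ s := by
  set n := ⌊s / δ⌋₊
  have hδn : s / (n + 1 : ℝ) ≤ δ := (div_le_comm₀ hδ n.cast_add_one_pos).1
    (Nat.lt_floor_add_one _).le
  have hns : (n + s : ℝ) ≤ s * (δ⁻¹ + 1) := by
    have hn : (n : ℝ) ≤ s / δ := Nat.floor_le (by positivity)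
    rw [mul_add_one, ← div_eq_mul_inv]
    gcongr
  refine ⟨gridBrackets s n, (isBracketingCover_gridBrackets s n).mono hδn, ?_⟩
  calc (#(gridBrackets s n) : ℝ) ≤ (n + s).choose s := mod_cast card_gridBrackets_le s n
    _ ≤ (n + s : ℝ) ^ s / s.factorial := mod_cast Nat.choose_le_pow_div s (n + s)
    _ ≤ (s * (δ⁻¹ + 1)) ^ s / s.factorial := by gcongr
    _ = s ^ s / s.factorial * (δ⁻¹ + 1) ^ s := by rw [mul_pow, mul_div_right_comm]

theorem stmt_4_general (s : ℕ) (hδ : 0 < δ) :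
    ∃ Γ : Finset (Fin s → ℝ), IsDeltaCover s δ Γ ∧
      (#Γ : ℝ) ≤ 2 * exp 1 ^ s * (δ⁻¹ + 1) ^ s := by
  obtain ⟨B, hB, hcard⟩ := exists_isBracketingCover_card_le s hδ
  have pow_div_factorial_le : (s : ℝ) ^ s / s.factorial ≤ exp 1 ^ s :=
    (pow_div_factorial_le_exp _ s.cast_nonneg s).trans_eq (exp_one_pow s).symm
  refine ⟨corners B, hB.isDeltaCover_corners, ?_⟩
  calc (#(corners B) : ℝ) ≤ 2 * #B := mod_cast card_corners_le B
    _ ≤ 2 * (s ^ s / s.factorial * (δ⁻¹ + 1) ^ s) := by gcongr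
    _ ≤ 2 * (exp 1 ^ s * (δ⁻¹ + 1) ^ s) := by gcongr
    _ = 2 * exp 1 ^ s * (δ⁻¹ + 1) ^ s := (mul_assoc _ _ _).symm

theorem stmt_4 (s : ℕ) (hs : 1 ≤ s) (δ : ℝ) (hδ : δ ∈ Set.Ioc (0:ℝ) 1) :
    ∃ Γ : Finset (Fin s → ℝ), IsDeltaCover s δ Γ ∧
      (Γ.card : ℝ) ≤ (2 * Real.exp 1) ^ s * (δ⁻¹ + 1) ^ s := by
  obtain ⟨Γ, hΓ, hcard⟩ := stmt_4_general s hδ.1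
  have two_le_two_pow : (2 : ℝ) ≤ 2 ^ s := le_self_pow₀ one_le_two (by omega)
  refine ⟨Γ, hΓ, hcard.trans ?_⟩
  rw [mul_pow]
  have := hδ.1
  gcongr
end
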